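/- arXiv:1603.01986 — 3 statements merged into one kernel-verified Lean document; each statement's English description precedes it below -/
import Mathlib

section
/- Gram matrix entries for the polynomials q_n: for all natural numbers k ≤ n with n ≥ 1, ∫₀¹ q_n(x)·q_k(x) dx = (-1)^{n+k} · ( (1/2)_{n-1} · k / (2·(n+2)!) ) · ∑_{j=0}^{k} [ (k+1)_j · (3/2)_j · (-(k-2)/2)_j · (-(k-1)/2)_j ] / [ (-n+3/2)_j · ((n+3)/2)_j · ((n+4)/2)_j · j! ], a terminating hypergeometric (₄F₃-type) sum (the terms with j > ⌊k/2⌋ vanish). Here (1/2)_{n-1} = Γ(n-1/2)/√π. -/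
open MeasureTheory intervalIntegral

/-- The Pochhammer symbol (rising factorial) `(a)_m = a(a+1)⋯(a+m-1)` over `ℝ`. -/
noncomputable def poch (a : ℝ) (m : ℕ) : ℝ := (ascPochhammer ℝ m).eval a

/-- The polynomial `p_n(x) = ∑_{k=0}^n (n choose k) ((k/2+1)_n / n!) (-1)^{n-k} x^k`. -/
noncomputable def pAlp (n : ℕ) (x : ℝ) : ℝ :=
  ∑ k ∈ Finset.range (n + 1),
    (n.choose k : ℝ) * (poch ((k : ℝ) / 2 + 1) n / (n.factorial : ℝ)) * (-1) ^ (n - k) * x ^ k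
/-- The polynomial `q_n(x) = ∑_{k=0}^n (n choose k) (((k+1)/2)_n / n!) (-1)^{n-k} x^k`. -/
noncomputable def qAlp (n : ℕ) (x : ℝ) : ℝ :=
  ∑ k ∈ Finset.range (n + 1),
    (n.choose k : ℝ) * (poch (((k : ℝ) + 1) / 2) n / (n.factorial : ℝ)) * (-1) ^ (n - k) * x ^ k

/-!
Write `q_n(x) = ∑ i, (n choose i) (-1)^(n-i) P(i) x^i` with `P` a polynomial of degree `n`.
Integrating against `x^s` over `[0, 1]` gives `∑ i, (n choose i) (-1)^(n-i) P(i) / (i + s + 1)`.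
Up to a factor this is the barycentric form of Lagrange interpolation of `P` at the nodes
`0, …, n`, evaluated at `-(s+1)`, so the moment is `(-1)^n n! P(-(s+1)) / (s+1)_{n+1}`; for `q_n`
one has `P(-(s+1)) = (-s/2)_n / n!`. Thus `q_n` is orthogonal to `x^0, x^2, …, x^(2n-2)`. Expanding
`q_k`, only the odd powers `x^(2j+1)` contribute to `∫ q_n q_k`, and the duplication and reflection
formulas for the Pochhammer symbol rewrite the `j`-th contribution as the `j`-th hypergeometric
term.
-/

section SignsAndSums

open Finset

lemma choose_mul_neg_one_pow_sub {R : Type*} [Ring R] (k s : ℕ) :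
    (k.choose s * (-1) ^ (k - s) : R) = k.choose s * (-1) ^ (k + s) := by
  rcases lt_or_ge k s with hlt | hle
  · rw [Nat.choose_eq_zero_of_lt hlt, Nat.cast_zero, zero_mul, zero_mul]
  · obtain ⟨d, rfl⟩ := Nat.exists_eq_add_of_le hle
    rw [Nat.add_sub_cancel_left, add_right_comm, ← two_mul, pow_add, pow_mul, neg_one_sq, one_pow,
      one_mul]

lemma sum_range_two_mul {M : Type*} [AddCommMonoid M] (f : ℕ → M) (m : ℕ) :
    ∑ i ∈ range (2 * m), f i = ∑ i ∈ range m, (f (2 * i) + f (2 * i + 1)) := by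
  induction m with
  | zero => simp
  | succ m ih => rw [mul_add_one, sum_range_succ, sum_range_succ, sum_range_succ, ih, add_assoc]

end SignsAndSums

section Pochhammer

open Polynomial
open scoped Nat

lemma ascPochhammer_eval_add {S : Type*} [CommSemiring S] (a : S) (m n : ℕ) :
    (ascPochhammer S (m + n)).eval a =
      (ascPochhammer S m).eval a * (ascPochhammer S n).eval (a + m) := by
  rw [← ascPochhammer_mul, eval_mul, eval_comp, eval_add, eval_X, eval_natCast]

lemma ascPochhammer_eval_neg {R : Type*} [CommRing R] (a : R) (n : ℕ) :
    (ascPochhammer R n).eval (-a) = (-1) ^ n * (ascPochhammer R n).eval (a - n + 1) := by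
  rw [ascPochhammer_eval_neg_eq_descPochhammer, descPochhammer_eval_eq_ascPochhammer]

-- Both sides are `(-1)^i (a - i)_{n + i}`, split after `n` and after `i` factors respectively.
lemma ascPochhammer_eval_sub_natCast_mul {R : Type*} [CommRing R] (a : R) (n i : ℕ) :
    (ascPochhammer R n).eval (a - i) * (ascPochhammer R i).eval (1 - a - n) =
      (ascPochhammer R n).eval a * (ascPochhammer R i).eval (1 - a) := by
  have reflect (b : R) :
      (ascPochhammer R i).eval (1 - b) = (-1) ^ i * (ascPochhammer R i).eval (b - i) := by
    rw [← neg_sub b 1, ascPochhammer_eval_neg]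
    congr 2
    ring
  have split_two_ways := ascPochhammer_eval_add (a - i) n i
  rw [add_comm n i, ascPochhammer_eval_add, sub_add_cancel, sub_add_eq_add_sub] at split_two_ways
  rw [sub_sub, reflect, reflect]
  linear_combination -(-1) ^ i * split_two_ways

lemma ascPochhammer_eval_two_mul {K : Type*} [Field K] [NeZero (2 : K)] (a : K) (n : ℕ) :
    (ascPochhammer K (2 * n)).eval a =
      4 ^ n * (ascPochhammer K n).eval (a / 2) * (ascPochhammer K n).eval ((a + 1) / 2) := by
  induction n with
  | zero => simp
  | succ n ih =>
    rw [mul_add_one, ascPochhammer_succ_eval (2 * n + 1), ascPochhammer_succ_eval (2 * n), ih,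
      ascPochhammer_succ_eval, ascPochhammer_succ_eval]
    push_cast
    field_simp
    ring

lemma ascPochhammer_eval_intCast_add_half_ne_zero {K : Type*} [Field K] [CharZero K]
    (m : ℤ) (n : ℕ) : (ascPochhammer K n).eval ((m : K) + 1 / 2) ≠ 0 := by
  rw [Ne, ascPochhammer_eval_eq_zero_iff]
  rintro ⟨i, -, hi⟩
  have odd_eq_zero : (2 * i + 2 * m + 1 : K) = 0 := by linear_combination 2 * hi
  norm_cast at odd_eq_zero
  omega

lemma choose_mul_factorial_eq_ascPochhammer_eval_neg {R : Type*} [CommRing R] (k m : ℕ) :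
    (k.choose m * m ! : R) = (-1) ^ m * (ascPochhammer R m).eval (-(k : R)) := by
  rw [ascPochhammer_eval_neg_eq_descPochhammer, descPochhammer_eval_eq_descFactorial, ← mul_assoc,
    ← mul_pow, neg_one_mul, neg_neg, one_pow, one_mul, Nat.descFactorial_eq_factorial_mul_choose,
    Nat.cast_mul, mul_comm]

lemma choose_two_mul_add_one_mul_factorial {K : Type*} [Field K] [NeZero (2 : K)] (k j : ℕ) :
    (k.choose (2 * j + 1) * (2 * j + 1)! : K) =
      k * 4 ^ j * (ascPochhammer K j).eval (-((k : K) - 2) / 2) *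
        (ascPochhammer K j).eval (-((k : K) - 1) / 2) := by
  rw [choose_mul_factorial_eq_ascPochhammer_eval_neg, add_comm (2 * j) 1, ascPochhammer_eval_add,
    ascPochhammer_one, eval_X, ascPochhammer_eval_two_mul, pow_add, pow_mul]
  push_cast
  ring_nf

lemma factorial_add_two_mul {K : Type*} [Field K] [NeZero (2 : K)] (n j : ℕ) :
    ((n + 2 * j)! : K) = n ! * 4 ^ j * (ascPochhammer K j).eval (((n : K) + 1) / 2) *
      (ascPochhammer K j).eval (((n : K) + 2) / 2) := by
  rw [← factorial_mul_ascPochhammer, ascPochhammer_eval_two_mul]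
  ring_nf

lemma factorial_mul_ascPochhammer_comm {S : Type*} [CommSemiring S] (i k : ℕ) :
    (i ! : S) * (ascPochhammer S k).eval ((i : S) + 1) =
      k ! * (ascPochhammer S i).eval ((k : S) + 1) := by
  rw [factorial_mul_ascPochhammer, factorial_mul_ascPochhammer, add_comm]

end Pochhammer

section Interpolation

open Finset Polynomial
open scoped Nat

lemma prod_erase_range_natCast_sub {R : Type*} [CommRing R] {n k : ℕ} (hk : k ≤ n) :
    ∏ j ∈ (range (n + 1)).erase k, ((k : R) - j) = (-1) ^ (n - k) * k ! * (n - k)! := by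
  have split : (range (n + 1)).erase k = range k ∪ Ico (k + 1) (n + 1) := by
    ext j
    simp only [mem_erase, mem_range, mem_union, mem_Ico]
    omega
  have below : ∏ j ∈ range k, ((k : R) - j) = k ! := by
    rw [← descPochhammer_eval_eq_prod_range, descPochhammer_eval_eq_descFactorial,
      Nat.descFactorial_self]
  have above : ∏ j ∈ Ico (k + 1) (n + 1), ((k : R) - j) = (-1) ^ (n - k) * (n - k)! := by
    rw [prod_Ico_eq_prod_range, Nat.add_sub_add_right, ← prod_range_add_one_eq_factorial,
      Nat.cast_prod, ← card_range (n - k), ← prod_const, card_range, ← prod_mul_distrib]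
    refine prod_congr rfl fun i _ => ?_
    push_cast
    ring
  rw [split, prod_union, below, above]
  · ring
  · exact disjoint_left.2 fun j hj hj' => by
      rw [mem_range] at hj
      rw [mem_Ico] at hj'
      omega

variable {K : Type*} [Field K]

lemma eval_neg_nodal_range_natCast (m : ℕ) (a : K) :
    (Lagrange.nodal (range m) (Nat.cast : ℕ → K)).eval (-a) =
      (-1) ^ m * (ascPochhammer K m).eval a := by
  rw [Lagrange.eval_nodal, ← descPochhammer_eval_eq_prod_range,
    descPochhammer_eval_eq_ascPochhammer, ← neg_neg a, ascPochhammer_eval_neg, neg_neg,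
    ← mul_assoc, ← mul_pow, neg_one_mul, neg_neg, one_pow, one_mul]

variable [CharZero K]

lemma nodalWeight_range_natCast {n k : ℕ} (hk : k ≤ n) :
    Lagrange.nodalWeight (range (n + 1)) (Nat.cast : ℕ → K) k =
      (-1) ^ (n - k) * n.choose k / n ! := by
  rw [Lagrange.nodalWeight, prod_inv_distrib, prod_erase_range_natCast_sub hk,
    Nat.cast_choose K hk]
  have hfactorial : (n ! : K) ≠ 0 := Nat.cast_ne_zero.2 n.factorial_ne_zero
  rw [mul_inv, mul_inv, ← inv_pow, inv_neg_one]
  field_simp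

theorem sum_choose_mul_eval_div_natCast_add {n : ℕ} {P : K[X]} (hP : P.natDegree ≤ n) {a : K}
    (ha : ∀ k ≤ n, (k : K) + a ≠ 0) :
    ∑ k ∈ range (n + 1), n.choose k * (-1) ^ (n - k) * P.eval (k : K) / (k + a) =
      (-1) ^ n * n ! * P.eval (-a) / (ascPochhammer K (n + 1)).eval a := by
  have hnodes : ∀ k ∈ range (n + 1), -a ≠ (k : K) := fun k hk h =>
    ha k (Nat.lt_succ_iff.1 (mem_range.1 hk)) (by rw [← h, neg_add_cancel])
  have hdegree : P.degree < #(range (n + 1)) := by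
    rw [card_range]
    exact degree_le_natDegree.trans_lt (by exact_mod_cast Nat.lt_succ_iff.2 hP)
  have hasc : (ascPochhammer K (n + 1)).eval a ≠ 0 := by
    have hnodal := Lagrange.eval_nodal_not_at_node hnodes
    rw [eval_neg_nodal_range_natCast] at hnodal
    exact right_ne_zero_of_mul hnodal
  have barycentric : P.eval (-a) = (-1) ^ (n + 1) * (ascPochhammer K (n + 1)).eval a *
      ∑ k ∈ range (n + 1), -(n.choose k * (-1) ^ (n - k) * P.eval (k : K) / (k + a)) / n ! := by
    conv_lhs => rw [Lagrange.eq_interpolate Nat.cast_injective.injOn hdegree,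
      Lagrange.eval_interpolate_not_at_node _ hnodes, eval_neg_nodal_range_natCast]
    congr 1
    refine sum_congr rfl fun k hk => ?_
    rw [nodalWeight_range_natCast (Nat.lt_succ_iff.1 (mem_range.1 hk)), ← neg_add', inv_neg,
      add_comm a]
    ring
  have hfactorial : (n ! : K) ≠ 0 := Nat.cast_ne_zero.2 n.factorial_ne_zero
  have sign_mul_self : ((-1) ^ n * (-1) ^ n : K) = 1 := by simp [← mul_pow]
  rw [barycentric, ← sum_div, sum_neg_distrib, pow_succ]
  field_simp
  linear_combination (-∑ k ∈ range (n + 1),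
    n.choose k * (-1) ^ (n - k) * P.eval (k : K) / (k + a)) * sign_mul_self

end Interpolation

section Moments

open Finset Polynomial
open scoped Nat

lemma integral_mul_sum_pow {f : ℝ → ℝ} {a b : ℝ} (hf : IntervalIntegrable f volume a b)
    (c : ℕ → ℝ) (m : ℕ) :
    ∫ x in a..b, f x * ∑ i ∈ range m, c i * x ^ i =
      ∑ i ∈ range m, c i * ∫ x in a..b, f x * x ^ i := by
  simp_rw [mul_sum, mul_left_comm (f _)]
  rw [intervalIntegral.integral_finsetSum fun i _ =>
    (hf.mul_continuousOn (continuous_pow i).continuousOn).const_mul (c i)]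
  simp_rw [intervalIntegral.integral_const_mul]

theorem integral_pow_mul_sum_choose_mul_eval {n : ℕ} {P : ℝ[X]} (hP : P.natDegree ≤ n) (s : ℕ) :
    ∫ x in (0 : ℝ)..1, x ^ s * ∑ k ∈ range (n + 1),
        n.choose k * (-1) ^ (n - k) * P.eval (k : ℝ) * x ^ k =
      (-1) ^ n * n ! * P.eval (-((s : ℝ) + 1)) / (ascPochhammer ℝ (n + 1)).eval ((s : ℝ) + 1) := by
  rw [integral_mul_sum_pow ((continuous_pow s).intervalIntegrable _ _),
    ← sum_choose_mul_eval_div_natCast_add hP fun k _ => by positivity]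
  refine sum_congr rfl fun k _ => ?_
  simp_rw [← pow_add, integral_pow]
  push_cast
  rw [one_pow, zero_pow (Nat.succ_ne_zero _)]
  ring

/-- The coefficient of `x ^ s` in `q_n`; it vanishes for `s > n`, although the exponent `n - s`
is then truncated. -/
noncomputable def qAlpCoeff (n s : ℕ) : ℝ :=
  n.choose s * (poch (((s : ℝ) + 1) / 2) n / n !) * (-1) ^ (n - s)

lemma qAlp_eq_sum_qAlpCoeff (n : ℕ) (x : ℝ) :
    qAlp n x = ∑ s ∈ range (n + 1), qAlpCoeff n s * x ^ s := rfl

lemma qAlpCoeff_eq_zero {n s : ℕ} (h : n < s) : qAlpCoeff n s = 0 := by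
  rw [qAlpCoeff, Nat.choose_eq_zero_of_lt h, Nat.cast_zero, zero_mul, zero_mul]

lemma continuous_qAlp (n : ℕ) : Continuous (qAlp n) := by
  unfold qAlp
  fun_prop

theorem integral_qAlp_mul_pow (n s : ℕ) :
    ∫ x in (0 : ℝ)..1, qAlp n x * x ^ s =
      (-1) ^ n * poch (-(s : ℝ) / 2) n / poch ((s : ℝ) + 1) (n + 1) := by
  let P : ℝ[X] := C (n ! : ℝ)⁻¹ * (ascPochhammer ℝ n).comp (C (1 / 2) * X + C (1 / 2))
  have hP (x : ℝ) : P.eval x = poch ((x + 1) / 2) n / n ! := by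
    simp only [P, poch, eval_mul, eval_comp, eval_add, eval_C, eval_X]
    ring_nf
  have hdegree : P.natDegree ≤ n :=
    calc P.natDegree ≤ ((ascPochhammer ℝ n).comp (C (1 / 2) * X + C (1 / 2))).natDegree :=
          natDegree_C_mul_le _ _
      _ ≤ n * 1 := by
          rw [natDegree_comp, ascPochhammer_natDegree]
          exact Nat.mul_le_mul_left n natDegree_linear_le
      _ = n := mul_one n
  have hq (x : ℝ) : qAlp n x * x ^ s =
      x ^ s * ∑ k ∈ range (n + 1), n.choose k * (-1) ^ (n - k) * P.eval (k : ℝ) * x ^ k := by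
    simp_rw [hP, mul_right_comm (n.choose _ : ℝ) ((-1 : ℝ) ^ _), mul_comm (x ^ s), qAlp]
  simp_rw [hq]
  rw [integral_pow_mul_sum_choose_mul_eval hdegree, hP, neg_add, neg_add_cancel_right, mul_assoc,
    mul_div_cancel₀ _ (by positivity)]
  rfl

lemma integral_qAlp_mul_pow_two_mul {n j : ℕ} (h : j < n) :
    ∫ x in (0 : ℝ)..1, qAlp n x * x ^ (2 * j) = 0 := by
  have hzero : poch (-((2 * j : ℕ) : ℝ) / 2) n = 0 := by
    rw [Nat.cast_mul, Nat.cast_two, ← mul_neg, mul_div_cancel_left₀ _ two_ne_zero]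
    exact ascPochhammer_eval_neg_coe_nat_of_lt h
  rw [integral_qAlp_mul_pow, hzero, mul_zero, zero_div]

lemma poch_neg_half {n : ℕ} (hn : 1 ≤ n) : poch (-1 / 2) n = -(poch (1 / 2) (n - 1) / 2) := by
  obtain ⟨m, rfl⟩ := Nat.exists_eq_add_of_le hn
  rw [poch, ascPochhammer_eval_add, ascPochhammer_one, eval_X, Nat.add_sub_cancel_left, poch]
  norm_num
  ring

theorem integral_qAlp_mul_pow_two_mul_add_one {n : ℕ} (hn : 1 ≤ n) (j : ℕ) :
    ∫ x in (0 : ℝ)..1, qAlp n x * x ^ (2 * j + 1) =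
      (-1) ^ (n + 1) * poch (1 / 2) (n - 1) * poch (3 / 2) j * (2 * j + 1)! /
        (2 * (n + 2)! * 4 ^ j * poch (-(n : ℝ) + 3 / 2) j * poch (((n : ℝ) + 3) / 2) j *
          poch (((n : ℝ) + 4) / 2) j) := by
  have numerator : poch (-((2 * j + 1 : ℕ) : ℝ) / 2) n * poch (-(n : ℝ) + 3 / 2) j =
      -(poch (1 / 2) (n - 1) / 2) * poch (3 / 2) j := by
    rw [← poch_neg_half hn]
    convert ascPochhammer_eval_sub_natCast_mul (-1 / 2 : ℝ) n j using 2 <;>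
      (unfold poch; push_cast; ring_nf)
  have denominator : poch (((2 * j + 1 : ℕ) : ℝ) + 1) (n + 1) * (2 * j + 1)! =
      (n + 2)! * 4 ^ j * poch (((n : ℝ) + 3) / 2) j * poch (((n : ℝ) + 4) / 2) j := by
    rw [mul_comm, poch, factorial_mul_ascPochhammer,
      show 2 * j + 1 + (n + 1) = n + 2 + 2 * j by ring, factorial_add_two_mul, poch, poch]
    push_cast
    ring_nf
  have half_int_ne_zero : poch (-(n : ℝ) + 3 / 2) j ≠ 0 := by
    convert ascPochhammer_eval_intCast_add_half_ne_zero (K := ℝ) (1 - n) j using 1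
    unfold poch
    push_cast
    ring_nf
  rw [integral_qAlp_mul_pow, eq_div_of_mul_eq half_int_ne_zero numerator,
    eq_div_of_mul_eq (by positivity) denominator]
  field_simp
  ring

lemma qAlpCoeff_two_mul_add_one (k j : ℕ) :
    qAlpCoeff k (2 * j + 1) =
      (-1) ^ (k + 1) * k * 4 ^ j * poch ((k : ℝ) + 1) j * poch (-((k : ℝ) - 2) / 2) j *
        poch (-((k : ℝ) - 1) / 2) j / ((2 * j + 1)! * j !) := by
  have hchoose := choose_two_mul_add_one_mul_factorial (K := ℝ) k j
  have hpoch : poch (((2 * j + 1 : ℕ) + 1) / 2) k * j ! = k ! * poch ((k : ℝ) + 1) j := by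
    rw [mul_comm, poch, poch, ← factorial_mul_ascPochhammer_comm]
    push_cast
    ring_nf
  have hsign : (-1 : ℝ) ^ (k + (2 * j + 1)) = (-1) ^ (k + 1) := by
    rw [add_left_comm, pow_add, pow_mul, neg_one_sq, one_pow, one_mul]
  rw [qAlpCoeff, mul_right_comm, choose_mul_neg_one_pow_sub, hsign,
    eq_div_of_mul_eq (by positivity) hchoose, eq_div_of_mul_eq (by positivity) hpoch, ← poch,
    ← poch]
  field_simp

end Moments

section Gram

open Finset

lemma integral_qAlp_mul_qAlp_eq_sum_odd {n k : ℕ} (h : k < 2 * n) :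
    ∫ x in (0 : ℝ)..1, qAlp n x * qAlp k x =
      ∑ j ∈ range (k + 1),
        qAlpCoeff k (2 * j + 1) * ∫ x in (0 : ℝ)..1, qAlp n x * x ^ (2 * j + 1) := by
  simp_rw [qAlp_eq_sum_qAlpCoeff k]
  rw [integral_mul_sum_pow ((continuous_qAlp n).intervalIntegrable 0 1),
    sum_subset (range_subset_range.2 (Nat.le_mul_of_pos_left (k + 1) two_pos)) fun s _ hs => by
      rw [qAlpCoeff_eq_zero (by simpa using hs), zero_mul],
    sum_range_two_mul]
  refine sum_congr rfl fun j _ => add_eq_right.2 ?_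
  rcases lt_or_ge k (2 * j) with hlt | hle
  · rw [qAlpCoeff_eq_zero hlt, zero_mul]
  · rw [integral_qAlp_mul_pow_two_mul (by omega), mul_zero]

theorem gram_qAlp_general {n k : ℕ} (h : k < 2 * n) :
    ∫ x in (0 : ℝ)..1, qAlp n x * qAlp k x =
      (-1) ^ (n + k) * (poch (1 / 2) (n - 1) * (k : ℝ) / (2 * ((n + 2).factorial : ℝ))) *
        ∑ j ∈ range (k + 1),
          (poch ((k : ℝ) + 1) j * poch (3 / 2) j * poch (-((k : ℝ) - 2) / 2) j
              * poch (-((k : ℝ) - 1) / 2) j) /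
            (poch (-(n : ℝ) + 3 / 2) j * poch (((n : ℝ) + 3) / 2) j
              * poch (((n : ℝ) + 4) / 2) j * (j.factorial : ℝ)) := by
  rw [integral_qAlp_mul_qAlp_eq_sum_odd h, mul_sum]
  refine sum_congr rfl fun j _ => ?_
  rw [qAlpCoeff_two_mul_add_one, integral_qAlp_mul_pow_two_mul_add_one (by omega)]
  have : ((2 * j + 1).factorial : ℝ) ≠ 0 := by positivity
  have : (4 : ℝ) ^ j ≠ 0 := by positivity
  field_simp
  ring

end Gram

/-- Gram matrix entries: for `1 ≤ n` and `k ≤ n`,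
`∫₀¹ q_n q_k = (-1)^{n+k} ((1/2)_{n-1} k/(2 (n+2)!)) ₄F₃`-type terminating sum. -/
theorem gram_qAlp (n k : ℕ) (hn : 1 ≤ n) (hkn : k ≤ n) :
    ∫ x in (0 : ℝ)..1, qAlp n x * qAlp k x =
      (-1) ^ (n + k) * (poch (1 / 2) (n - 1) * (k : ℝ) / (2 * ((n + 2).factorial : ℝ))) *
        ∑ j ∈ Finset.range (k + 1),
          (poch ((k : ℝ) + 1) j * poch (3 / 2) j * poch (-((k : ℝ) - 2) / 2) j
              * poch (-((k : ℝ) - 1) / 2) j) /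
            (poch (-(n : ℝ) + 3 / 2) j * poch (((n : ℝ) + 3) / 2) j
              * poch (((n : ℝ) + 4) / 2) j * (j.factorial : ℝ)) := by
  exact gram_qAlp_general (by omega)
end

section
/- Diagonal type I Legendre-Angelesco polynomials: for every natural number n, set c = (1/2)·(3n+2)!/(n!·(2n+1)!) and define Q: ℝ → ℝ by Q(x) = c·p_n(x) for x ∈ [0,1], Q(x) = -c·p_n(-x) for x ∈ [-1,0), and Q(x) = 0 otherwise. Then ∫_{-1}^1 Q(x)·x^k dx = 0 for every integer k with 0 ≤ k ≤ 2n, and ∫_{-1}^1 Q(x)·x^{2n+1} dx = 1. (Thus B_{n+1,n+1} = c·p_n and A_{n+1,n+1}(x) = -B_{n+1,n+1}(-x) are the type I Legendre-Angelesco polynomials for the multi-index (n+1,n+1) with respect to Lebesgue measure on [-1,0] and [0,1].) -/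
open MeasureTheory intervalIntegral

/-!
Write `p_n(x) = ∑ (-1)^(n-k) (n choose k) S(k) x^k`, where `S(t) = binom(n + t/2, n)` is a
polynomial of degree `n` in `t`. The moment `∫₀¹ p_n(x) x^s dx` is then the `n`-th forward
difference of `S(t) / (t + s + 1)` at `t = 0`. Dividing `S` by `t + s + 1` leaves a quotient of
degree `< n`, which the `n`-th difference kills, and the remainder `S(-(s+1))`. Hence the moment is
a multiple of `S(-(s+1))`, which for `s = 2m + 1` is `(-1)^n (m choose n)`: it vanishes for `m < n`
but not for `m = n`. The even moments of `Q` vanish because `Q` is odd.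
-/

section ForwardDifferences

open Polynomial fwdDiff

theorem fwdDiff_iter_eval_eq_zero_of_degree_lt {R : Type*} [CommRing R] {P : R[X]} {n : ℕ}
    (hP : P.degree < n) : (Δ_[1])^[n] P.eval = 0 := by
  rcases eq_or_ne P 0 with rfl | hP0
  · ext x
    simp [fwdDiff_iter_eq_sum_shift]
  · exact fwdDiff_iter_eq_zero_of_degree_lt ((natDegree_lt_iff_degree_lt hP0).2 hP)

variable {K : Type*} [Field K]

theorem fwdDiff_iter_inv (n : ℕ) {a : K} (ha : (ascPochhammer K (n + 1)).eval a ≠ 0) :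
    (Δ_[1])^[n] (fun x : K ↦ x⁻¹) a
      = (-1) ^ n * n.factorial / (ascPochhammer K (n + 1)).eval a := by
  induction n generalizing a with
  | zero => simp
  | succ n ih =>
    have split_first : (ascPochhammer K (n + 2)).eval a
        = a * (ascPochhammer K (n + 1)).eval (a + 1) := by
      simp [ascPochhammer_succ_left K (n + 1)]
    have split_last : (ascPochhammer K (n + 2)).eval a
        = (ascPochhammer K (n + 1)).eval a * (a + (n + 1 : ℕ)) :=
      ascPochhammer_succ_eval (n + 1) a
    obtain ⟨ha_ne, hshift_ne⟩ := mul_ne_zero_iff.1 (split_first ▸ ha)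
    obtain ⟨hinit_ne, hlast_ne⟩ := mul_ne_zero_iff.1 (split_last ▸ ha)
    have hshift : ((ascPochhammer K (n + 1)).eval (a + 1))⁻¹
        = a / (ascPochhammer K (n + 2)).eval a := by
      rw [split_first]; field_simp
    have hinit : ((ascPochhammer K (n + 1)).eval a)⁻¹
        = (a + (n + 1 : ℕ)) / (ascPochhammer K (n + 2)).eval a := by
      rw [split_last]; field_simp
    rw [Function.iterate_succ_apply', fwdDiff, ih hshift_ne, ih hinit_ne, div_eq_mul_inv,
      div_eq_mul_inv, hshift, hinit, Nat.factorial_succ]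
    push_cast
    ring

theorem sum_choose_mul_eval_div_add {n : ℕ} {P : K[X]} (hP : P.natDegree ≤ n) {a : K}
    (ha : (ascPochhammer K (n + 1)).eval a ≠ 0) :
    ∑ k ∈ Finset.range (n + 1), (-1) ^ (n - k) * (n.choose k : K) * (P.eval (k : K) / (k + a))
      = (-1) ^ n * n.factorial * P.eval (-a) / (ascPochhammer K (n + 1)).eval a := by
  set R := P /ₘ (X - C (-a)) with hR
  have division (x : K) : P.eval x = P.eval (-a) + (x + a) * R.eval x := by
    have h := congrArg (eval x) (modByMonic_add_div P (X - C (-a)))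
    rw [modByMonic_X_sub_C_eq_C_eval, ← hR] at h
    simpa using h.symm
  have quotient_diff : (Δ_[1])^[n] R.eval 0 = 0 := by
    have hdegree : R.degree < n := by
      rcases eq_or_ne P 0 with rfl | hP0
      · simp [hR]
      · exact (degree_divByMonic_lt P (X - C (-a)) hP0 (degree_X_sub_C (-a) ▸ one_pos)).trans_le
          (degree_le_of_natDegree_le hP)
    rw [fwdDiff_iter_eval_eq_zero_of_degree_lt hdegree, Pi.zero_apply]
  have node_ne {k : ℕ} (hk : k ∈ Finset.range (n + 1)) : (k : K) + a ≠ 0 := fun h ↦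
    ha ((ascPochhammer_eval_eq_zero_iff (n + 1) a).2
      ⟨k, Finset.mem_range.1 hk, eq_neg_of_add_eq_zero_left h⟩)
  calc ∑ k ∈ Finset.range (n + 1), (-1) ^ (n - k) * (n.choose k : K) * (P.eval (k : K) / (k + a))
      = P.eval (-a) * (Δ_[1])^[n] (fun x : K ↦ x⁻¹) a + (Δ_[1])^[n] R.eval 0 := by
        simp only [fwdDiff_iter_eq_sum_shift, Finset.mul_sum, ← Finset.sum_add_distrib]
        refine Finset.sum_congr rfl fun k hk ↦ ?_
        have := node_ne hk
        rw [division k]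
        simp only [nsmul_eq_mul, mul_one, zsmul_eq_mul, zero_add, add_comm a]
        push_cast
        field_simp
    _ = (-1) ^ n * n.factorial * P.eval (-a) / (ascPochhammer K (n + 1)).eval a := by
        rw [quotient_diff, fwdDiff_iter_inv n ha]
        ring

end ForwardDifferences

section Integrals

theorem integral_sum_mul_pow_mul_pow (s : Finset ℕ) (a : ℕ → ℝ) (m : ℕ) :
    ∫ x in (0 : ℝ)..1, (∑ k ∈ s, a k * x ^ k) * x ^ m = ∑ k ∈ s, a k / (k + (m + 1)) := by
  simp only [Finset.sum_mul, mul_assoc, ← pow_add]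
  rw [integral_finsetSum fun k _ ↦ Continuous.intervalIntegrable (by fun_prop) 0 1]
  simp [integral_pow, add_assoc, div_eq_mul_inv]

theorem integral_symm_interval_eq_integral_add_comp_neg {E : Type*} [NormedAddCommGroup E]
    [NormedSpace ℝ E] {g : ℝ → E} {b : ℝ}
    (hpos : IntervalIntegrable g volume 0 b)
    (hneg : IntervalIntegrable (fun x ↦ g (-x)) volume 0 b) :
    ∫ x in -b..b, g x = ∫ x in 0..b, (g x + g (-x)) := by
  have hneg' : IntervalIntegrable g volume (-b) 0 := by
    simpa using ((IntervalIntegrable.iff_comp_neg (by finiteness)).1 hneg).symm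
  rw [← integral_add_adjacent_intervals hneg' hpos, integral_add hpos hneg, integral_comp_neg,
    neg_zero, add_comm]

theorem integral_mul_pow_of_odd_extension {f Q : ℝ → ℝ} {b : ℝ}
    (hf : IntervalIntegrable f volume 0 b) (hpos : ∀ x ∈ Set.uIoo 0 b, Q x = f x)
    (hneg : ∀ x ∈ Set.uIoo 0 b, Q (-x) = -f x) (k : ℕ) :
    ∫ x in -b..b, Q x * x ^ k = (1 - (-1) ^ k) * ∫ x in 0..b, f x * x ^ k := by
  have hmoment : IntervalIntegrable (fun x ↦ f x * x ^ k) volume 0 b :=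
    hf.mul_continuousOn (by fun_prop)
  have hright : Set.EqOn (fun x ↦ f x * x ^ k) (fun x ↦ Q x * x ^ k) (Set.uIoo 0 b) :=
    fun x hx ↦ by simp only [hpos x hx]
  have hleft : Set.EqOn (fun x ↦ -(-1) ^ k * (f x * x ^ k)) (fun x ↦ Q (-x) * (-x) ^ k)
      (Set.uIoo 0 b) := fun x hx ↦ by
    simp only [hneg x hx, neg_pow x k]
    ring
  rw [integral_symm_interval_eq_integral_add_comp_neg (hmoment.congr_uIoo hright)
      ((hmoment.const_mul _).congr_uIoo hleft),
    ← intervalIntegral.integral_const_mul]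
  refine integral_congr_uIoo fun x hx ↦ ?_
  linear_combination -hright hx - hleft hx

end Integrals

section Moments

open Polynomial

/-- The generalized binomial coefficient `binom(n + t/2, n)` as a polynomial in `t`. Its value
at `t = k`, multiplied by `(-1)^(n-k) (n choose k)`, is the coefficient of `x^k` in `p_n`. -/
noncomputable def halfChoosePoly (n : ℕ) : ℝ[X] :=
  C (n.factorial : ℝ)⁻¹ * (ascPochhammer ℝ n).comp (C (1 / 2) * X + C 1)

theorem eval_halfChoosePoly (n : ℕ) (t : ℝ) :
    (halfChoosePoly n).eval t = poch (t / 2 + 1) n / n.factorial := by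
  simp [halfChoosePoly, poch, eval_comp, div_eq_inv_mul]

theorem natDegree_halfChoosePoly_le (n : ℕ) : (halfChoosePoly n).natDegree ≤ n := by
  calc (halfChoosePoly n).natDegree
      ≤ ((ascPochhammer ℝ n).comp (C (1 / 2) * X + C 1)).natDegree := natDegree_C_mul_le _ _
    _ = n * (C (1 / 2 : ℝ) * X + C 1).natDegree := by rw [natDegree_comp, ascPochhammer_natDegree]
    _ ≤ n * 1 := Nat.mul_le_mul_left n natDegree_linear_le
    _ = n := mul_one n

theorem pAlp_eq_sum_eval_halfChoosePoly (n : ℕ) (x : ℝ) :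
    pAlp n x = ∑ k ∈ Finset.range (n + 1),
      (-1) ^ (n - k) * (n.choose k : ℝ) * (halfChoosePoly n).eval (k : ℝ) * x ^ k := by
  simp only [pAlp, eval_halfChoosePoly]
  exact Finset.sum_congr rfl fun k _ ↦ by ring

theorem continuous_pAlp (n : ℕ) : Continuous (pAlp n) := by
  unfold pAlp
  fun_prop

theorem poch_neg_natCast (m n : ℕ) : poch (-(m : ℝ)) n = (-1) ^ n * m.descFactorial n := by
  rw [poch, ascPochhammer_eval_neg_eq_descPochhammer, descPochhammer_eval_eq_descFactorial]

theorem integral_pAlp_mul_pow (n s : ℕ) :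
    ∫ x in (0 : ℝ)..1, pAlp n x * x ^ s
      = (-1) ^ n * poch ((1 - s) / 2) n / poch (s + 1) (n + 1) := by
  have hpoch : (ascPochhammer ℝ (n + 1)).eval ((s : ℝ) + 1) ≠ 0 :=
    (ascPochhammer_pos _ _ (by positivity)).ne'
  have harg : -((s : ℝ) + 1) / 2 + 1 = (1 - s) / 2 := by ring
  simp only [pAlp_eq_sum_eval_halfChoosePoly, integral_sum_mul_pow_mul_pow, mul_div_assoc]
  rw [sum_choose_mul_eval_div_add (natDegree_halfChoosePoly_le n) hpoch, eval_halfChoosePoly, harg,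
    mul_assoc, mul_div_cancel₀ _ (by positivity), mul_div_assoc, poch, poch]

theorem integral_pAlp_mul_pow_odd (n m : ℕ) :
    ∫ x in (0 : ℝ)..1, pAlp n x * x ^ (2 * m + 1)
      = m.descFactorial n * (2 * m + 1).factorial / (2 * m + n + 2).factorial := by
  have harg : (1 - ((2 * m + 1 : ℕ) : ℝ)) / 2 = -m := by push_cast; ring
  have hfactorial : ((2 * m + 1).factorial : ℝ) * poch ((2 * m + 1 : ℕ) + 1) (n + 1)
      = (2 * m + n + 2).factorial := by
    rw [poch, factorial_mul_ascPochhammer, show 2 * m + 1 + (n + 1) = 2 * m + n + 2 by ring]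
  have hpoch : poch ((2 * m + 1 : ℕ) + 1) (n + 1) ≠ 0 :=
    (ascPochhammer_pos _ _ (by positivity)).ne'
  rw [integral_pAlp_mul_pow, harg, poch_neg_natCast, ← mul_assoc, ← mul_pow, neg_one_mul, neg_neg,
    one_pow, one_mul, ← hfactorial]
  field_simp

end Moments

/-- Diagonal type I Legendre-Angelesco polynomials: with
`c = (1/2)(3n+2)!/(n!(2n+1)!)` and `Q = c p_n` on `[0,1]`, `Q(x) = -c p_n(-x)` on `[-1,0)`,
`Q = 0` elsewhere, all moments of order `≤ 2n` vanish and the moment of order `2n+1` is `1`. -/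
theorem typeI_diagonal (n : ℕ) (c : ℝ)
    (hc : c = (1 / 2) * ((3 * n + 2).factorial : ℝ) /
      ((n.factorial : ℝ) * ((2 * n + 1).factorial : ℝ)))
    (Q : ℝ → ℝ)
    (hQ1 : ∀ x ∈ Set.Icc (0 : ℝ) 1, Q x = c * pAlp n x)
    (hQ2 : ∀ x ∈ Set.Ico (-1 : ℝ) 0, Q x = -c * pAlp n (-x))
    (hQ3 : ∀ x, x ∉ Set.Icc (-1 : ℝ) 1 → Q x = 0) :
    (∀ k : ℕ, k ≤ 2 * n → ∫ x in (-1 : ℝ)..1, Q x * x ^ k = 0) ∧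
      ∫ x in (-1 : ℝ)..1, Q x * x ^ (2 * n + 1) = 1 := by
  have moment (k : ℕ) : ∫ x in (-1 : ℝ)..1, Q x * x ^ k
      = (1 - (-1) ^ k) * (c * ∫ x in (0 : ℝ)..1, pAlp n x * x ^ k) := by
    rw [integral_mul_pow_of_odd_extension (f := fun x ↦ c * pAlp n x)
      ((continuous_pAlp n).const_mul c |>.intervalIntegrable 0 1)]
    · simp only [mul_assoc, intervalIntegral.integral_const_mul]
    · exact fun x hx ↦ hQ1 x (Set.Ioo_subset_Icc_self (Set.uIoo_of_le zero_le_one (α := ℝ) ▸ hx))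
    · rw [Set.uIoo_of_le zero_le_one]
      exact fun x hx ↦ by simpa using hQ2 (-x) ⟨neg_le_neg hx.2.le, neg_neg_of_pos hx.1⟩
  refine ⟨fun k hk ↦ ?_, ?_⟩
  · rw [moment]
    rcases k.even_or_odd' with ⟨m, rfl | rfl⟩
    · simp
    · have hm : m.descFactorial n = 0 := Nat.descFactorial_of_lt (by omega)
      simp [integral_pAlp_mul_pow_odd, hm]
  · rw [moment, integral_pAlp_mul_pow_odd, Nat.descFactorial_self, hc, pow_succ, pow_mul,
      show 2 * n + n + 2 = 3 * n + 2 by ring]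
    field_simp
    norm_num
end

section
/- Characterization of the second-to-last Alpert multiwavelet f_{n−1}: let n ≥ 2 and suppose f: ℝ → ℝ vanishes outside [−1,1], there is a polynomial P of degree at most n−1 with f(x) = P(x) for all x ∈ (0,1), f(−x) = f(x) for all x ∈ (0,1) (even symmetry), ∫_{−1}^1 f(x)·x^i dx = 0 for all integers 0 ≤ i ≤ 2n−3, and ∫_{−1}^1 f(x)² dx = 1. Then there is a real constant d with P = d·q_{n−1} and 2·d²·∫₀¹ q_{n−1}(x)² dx = 1. -/
open MeasureTheory intervalIntegral Polynomial

/-!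
By evenness, the even moments of `f` are twice those of `P` on `[0, 1]`. Writing `P = ∑ aₖ xᵏ`
and `m = n - 1`, their vanishing says `∑ₖ aₖ / (k + 2j + 1) = 0` for `j < m`, that is, the
rational function `R(s) = ∑ₖ aₖ / (s + k + 1)` vanishes at `s = 0, 2, …, 2m - 2`. The numerator of
`R` over the common denominator `∏ₖ (s + k + 1)` has degree at most `m`, so it is a multiple of
`∏ⱼ (s - 2j)`, and the coefficients `aₖ` are recovered as the residues of `R` at `s = -(k + 1)`.
-/

theorem eq_C_mul_nodal_of_eval_eq_zero {K ι : Type*} [Field K] {t : Finset ι} {w : ι → K}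
    {p : K[X]} (hw : Set.InjOn w t) (hdeg : p.natDegree ≤ t.card)
    (hzero : ∀ j ∈ t, p.eval (w j) = 0) :
    p = C (p.coeff t.card) * Lagrange.nodal t w := by
  refine eq_of_degree_sub_lt_of_eval_index_eq t hw ?_ fun j hj => ?_
  · have hcoeff : (Lagrange.nodal t w).coeff t.card = 1 := by
      simpa using (Lagrange.nodal_monic (s := t) (v := w)).coeff_natDegree
    refine (degree_lt_iff_coeff_zero _ _).2 fun i hi => ?_
    rcases hi.eq_or_lt with rfl | hlt
    · simp [hcoeff]
    · have hnodal : (Lagrange.nodal t w).coeff i = 0 :=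
        coeff_eq_zero_of_natDegree_lt (by simpa using hlt)
      simp [coeff_eq_zero_of_natDegree_lt (hdeg.trans_lt hlt), hnodal]
  · simp [hzero j hj, Lagrange.eval_nodal_at_node hj]

theorem exists_eq_mul_nodalWeight_of_sum_div_eq_zero {K ι κ : Type*} [Field K] [DecidableEq ι]
    {s : Finset ι} {t : Finset κ} {v : ι → K} {w : κ → K} {a : ι → K}
    (hv : Set.InjOn v s) (hw : Set.InjOn w t) (hcard : s.card = t.card + 1)
    (hne : ∀ j ∈ t, ∀ k ∈ s, w j ≠ v k)
    (hsum : ∀ j ∈ t, ∑ k ∈ s, a k / (w j - v k) = 0) :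
    ∃ c : K, ∀ k ∈ s,
      a k = c * Lagrange.nodalWeight s v k * (Lagrange.nodal t w).eval (v k) := by
  -- By the barycentric formula, `N` is the numerator of `∑ aₖ / (X - vₖ)` over `nodal s v`.
  let N := Lagrange.interpolate s v fun k => a k / Lagrange.nodalWeight s v k
  have hweight : ∀ k ∈ s, Lagrange.nodalWeight s v k ≠ 0 := fun k hk =>
    Lagrange.nodalWeight_ne_zero hv hk
  have hdeg : N.natDegree ≤ t.card :=
    natDegree_le_of_degree_le ((Lagrange.degree_interpolate_le _ hv).trans (by simp [hcard]))
  have hzero : ∀ j ∈ t, N.eval (w j) = 0 := fun j hj => by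
    rw [Lagrange.eval_interpolate_not_at_node _ (hne j hj), ← mul_zero (eval _ _), ← hsum j hj]
    congr 1
    refine Finset.sum_congr rfl fun k hk => ?_
    field_simp [hweight k hk]
  refine ⟨N.coeff t.card, fun k hk => ?_⟩
  have hnode : N.eval (v k) = a k / Lagrange.nodalWeight s v k :=
    Lagrange.eval_interpolate_at_node _ hv hk
  rw [eq_C_mul_nodal_of_eval_eq_zero hw hdeg hzero, eval_mul, eval_C,
    eq_div_iff (hweight k hk)] at hnode
  rw [← hnode, mul_right_comm]

theorem prod_range_natCast_sub_self {R : Type*} [CommRing R] (k : ℕ) :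
    ∏ l ∈ Finset.range k, ((l : R) - k) = (-1) ^ k * (k.factorial : R) := by
  induction k with
  | zero => simp
  | succ k ih =>
    simp only [Finset.prod_range_succ', Nat.cast_add, Nat.cast_one, add_sub_add_right_eq_sub, ih,
      Nat.factorial_succ]
    push_cast
    ring

theorem prod_range_erase_natCast_sub {R : Type*} [CommRing R] (k r : ℕ) :
    ∏ l ∈ (Finset.range (k + r + 1)).erase k, ((l : R) - k) =
      (-1) ^ k * (k.factorial : R) * (r.factorial : R) := by
  induction r with
  | zero => simp [Finset.range_add_one, prod_range_natCast_sub_self]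
  | succ r ih =>
    rw [← add_assoc, Finset.range_add_one, Finset.erase_insert_of_ne (by lia),
      Finset.prod_insert (by simp), ih, Nat.factorial_succ]
    push_cast
    ring

theorem nodalWeight_range_neg_natCast_add {K : Type*} [Field K] [CharZero K] (b : K) {m k : ℕ}
    (hk : k ≤ m) :
    Lagrange.nodalWeight (Finset.range (m + 1)) (fun l : ℕ => -((l : K) + b)) k =
      (-1) ^ k * (m.choose k : K) / (m.factorial : K) := by
  obtain ⟨r, rfl⟩ := Nat.exists_eq_add_of_le hk
  have hdiff (l : ℕ) : -((k : K) + b) - -((l : K) + b) = l - k := by ring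
  have hne (i : ℕ) : (i.factorial : K) ≠ 0 := mod_cast i.factorial_ne_zero
  simp only [Lagrange.nodalWeight, hdiff, Finset.prod_inv_distrib, prod_range_erase_natCast_sub,
    Nat.cast_add_choose, mul_inv, ← inv_pow, inv_neg_one]
  field_simp [hne]

theorem prod_range_neg_sub_mul {K : Type*} [Field K] {δ : K} (hδ : δ ≠ 0) (x : K) (m : ℕ) :
    ∏ j ∈ Finset.range m, (-x - δ * (j : K)) = (-δ) ^ m * (ascPochhammer K m).eval (x / δ) := by
  induction m with
  | zero => simp
  | succ m ih =>
    rw [Finset.prod_range_succ, ih, ascPochhammer_succ_eval]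
    field_simp
    ring

theorem exists_eq_mul_choose_mul_ascPochhammer_of_sum_div_eq_zero {K : Type*} [Field K]
    [CharZero K] {b δ : K} {m : ℕ} {a : ℕ → K} (hδ : δ ≠ 0)
    (hne : ∀ j < m, ∀ k ≤ m, (k : K) + δ * j + b ≠ 0)
    (hsum : ∀ j < m, ∑ k ∈ Finset.range (m + 1), a k / ((k : K) + δ * j + b) = 0) :
    ∃ d : K, ∀ k ≤ m, a k = d * ((m.choose k : K) *
      ((ascPochhammer K m).eval (((k : K) + b) / δ) / (m.factorial : K)) * (-1) ^ (m - k)) := by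
  have hsub (j k : ℕ) : δ * (j : K) - -((k : K) + b) = k + δ * j + b := by ring
  obtain ⟨c, hc⟩ := exists_eq_mul_nodalWeight_of_sum_div_eq_zero (a := a)
    (s := Finset.range (m + 1)) (t := Finset.range m)
    (v := fun k : ℕ => -((k : K) + b)) (w := fun j : ℕ => δ * (j : K))
    (fun k _ l _ hkl => by simpa using hkl) (fun i _ j _ hij => by simpa [hδ] using hij) (by simp)
    (fun j hj k hk => by
      rw [← sub_ne_zero, hsub]
      exact hne j (Finset.mem_range.1 hj) k (Finset.mem_range_succ_iff.1 hk))
    (fun j hj => by simpa only [hsub] using hsum j (Finset.mem_range.1 hj))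
  refine ⟨c * δ ^ m, fun k hk => ?_⟩
  have hsign : (-1 : K) ^ k * (-1) ^ m = (-1) ^ (m - k) := by
    rw [← pow_add, show k + m = 2 * k + (m - k) by lia, pow_add, pow_mul]
    simp
  rw [hc k (Finset.mem_range_succ_iff.2 hk), nodalWeight_range_neg_natCast_add b hk,
    Lagrange.eval_nodal, prod_range_neg_sub_mul hδ, neg_pow δ, ← hsign]
  ring

theorem integral_eval_mul_pow (P : ℝ[X]) {m : ℕ} (hdeg : P.natDegree ≤ m) (i : ℕ) :
    ∫ x in (0 : ℝ)..1, P.eval x * x ^ i =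
      ∑ k ∈ Finset.range (m + 1), P.coeff k / ((k : ℝ) + i + 1) := by
  have hexpand (x : ℝ) :
      P.eval x * x ^ i = ∑ k ∈ Finset.range (m + 1), P.coeff k * x ^ (k + i) := by
    simp only [eval_eq_sum_range' (Nat.lt_succ_of_le hdeg), Finset.sum_mul, pow_add, mul_assoc]
  simp_rw [hexpand]
  rw [intervalIntegral.integral_finsetSum
    fun k _ => Continuous.intervalIntegrable (by fun_prop) _ _]
  simp [integral_pow, div_eq_mul_inv]

theorem exists_eval_eq_mul_qAlp_of_integral_eq_zero {P : ℝ[X]} {m : ℕ} (hdeg : P.natDegree ≤ m)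
    (hmom : ∀ j < m, ∫ x in (0 : ℝ)..1, P.eval x * x ^ (2 * j) = 0) :
    ∃ d : ℝ, ∀ x, P.eval x = d * qAlp m x := by
  obtain ⟨d, hd⟩ := exists_eq_mul_choose_mul_ascPochhammer_of_sum_div_eq_zero
    (a := P.coeff) (m := m) (b := 1) two_ne_zero (fun j _ k _ => by positivity) fun j hj => by
      simpa [integral_eval_mul_pow P hdeg] using hmom j hj
  refine ⟨d, fun x => ?_⟩
  rw [eval_eq_sum_range' (Nat.lt_succ_of_le hdeg), qAlp, Finset.mul_sum]
  refine Finset.sum_congr rfl fun k hk => ?_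
  rw [hd k (Finset.mem_range_succ_iff.1 hk), poch, mul_assoc d]

theorem integral_neg_self_eq_two_smul {E : Type*} [NormedAddCommGroup E] [NormedSpace ℝ E]
    {g h : ℝ → E} {a : ℝ} (hint : IntervalIntegrable h volume 0 a)
    (hpos : ∀ x ∈ Set.uIoo 0 a, g x = h x) (hneg : ∀ x ∈ Set.uIoo 0 a, g (-x) = h x) :
    ∫ x in -a..a, g x = (2 : ℝ) • ∫ x in 0..a, h x := by
  have hright : Set.EqOn h g (Set.uIoo 0 a) := fun x hx => (hpos x hx).symm
  have hleft : Set.EqOn (fun x => h (-x)) g (Set.uIoo (-a) 0) := fun x hx => by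
    have hx' : -x ∈ Set.uIoo 0 a := by
      simpa [Set.uIoo, lt_neg, neg_lt, or_comm, and_comm] using hx
    simpa using (hneg (-x) hx').symm
  have hint_left : IntervalIntegrable (fun x => h (-x)) volume (-a) 0 := by
    simpa using ((IntervalIntegrable.iff_comp_neg).1 hint).symm
  rw [← integral_add_adjacent_intervals (hint_left.congr_uIoo hleft) (hint.congr_uIoo hright),
    ← integral_congr_uIoo hleft, ← integral_congr_uIoo hright, integral_comp_neg, neg_zero,
    neg_neg, two_smul]

/-- Characterization of the second-to-last Alpert multiwavelet `f_{n-1}`: any function supported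
on `[-1,1]` that is a polynomial of degree `≤ n-1` on `(0,1)`, even, with vanishing moments of
order `≤ 2n-3` and unit `L²`-norm, is proportional to `q_{n-1}` on `(0,1)`, with the
normalization `2 d² ∫₀¹ q_{n-1}² = 1`. -/
theorem alpert_second_last (n : ℕ) (hn : 2 ≤ n) (f : ℝ → ℝ) (P : Polynomial ℝ)
    (hPdeg : P.degree ≤ ((n - 1 : ℕ) : WithBot ℕ))
    (hsupp : ∀ x, x ∉ Set.Icc (-1 : ℝ) 1 → f x = 0)
    (hfP : ∀ x ∈ Set.Ioo (0 : ℝ) 1, f x = P.eval x)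
    (heven : ∀ x ∈ Set.Ioo (0 : ℝ) 1, f (-x) = f x)
    (hmom : ∀ i : ℕ, i ≤ 2 * n - 3 → ∫ x in (-1 : ℝ)..1, f x * x ^ i = 0)
    (hnorm : ∫ x in (-1 : ℝ)..1, (f x) ^ 2 = 1) :
    ∃ d : ℝ, (∀ x, P.eval x = d * qAlp (n - 1) x) ∧
      2 * d ^ 2 * ∫ x in (0 : ℝ)..1, (qAlp (n - 1) x) ^ 2 = 1 := by
  have hdeg : P.natDegree ≤ n - 1 := natDegree_le_of_degree_le hPdeg
  have hmom_half : ∀ j < n - 1, ∫ x in (0 : ℝ)..1, P.eval x * x ^ (2 * j) = 0 := fun j hj => by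
    have hfold : ∫ x in (-1 : ℝ)..1, f x * x ^ (2 * j) =
        (2 : ℝ) • ∫ x in (0 : ℝ)..1, P.eval x * x ^ (2 * j) :=
      integral_neg_self_eq_two_smul (Continuous.intervalIntegrable (by fun_prop) _ _)
        (by simp +contextual [hfP]) (by simp +contextual [heven, hfP])
    simpa [hmom (2 * j) (by lia)] using hfold
  have hnorm_half : ∫ x in (-1 : ℝ)..1, f x ^ 2 = (2 : ℝ) • ∫ x in (0 : ℝ)..1, P.eval x ^ 2 :=
    integral_neg_self_eq_two_smul (Continuous.intervalIntegrable (by fun_prop) _ _)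
      (by simp +contextual [hfP]) (by simp +contextual [heven, hfP])
  obtain ⟨d, hd⟩ := exists_eval_eq_mul_qAlp_of_integral_eq_zero hdeg hmom_half
  refine ⟨d, hd, ?_⟩
  simp_rw [hd, mul_pow] at hnorm_half
  rw [hnorm, intervalIntegral.integral_const_mul, smul_eq_mul, ← mul_assoc] at hnorm_half
  exact hnorm_half.symm
end
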